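/- For the family 𝔤₁₁(z₁, z₂, z₃, w₁, θ₁, θ₂) with z₁ ≠ 0, the structure J is never integrable: there exist E, F ∈ 𝔤 with N(E,F) ≠ 0. -/

import Mathlib

/-!
On the ideal spanned by `Z` and `W`, the bracket with `Y = J X` is `t = z₂ / z₁` times the bracket
with `X`. Hence `N(Z, X) = (1 + t J) u` with `u = [Z, X] + J [W, X]`. Since `J² = -1`, the operator
`1 + t J` is injective: `(1 - t J) (1 + t J) = 1 + t²`. Finally `u ≠ 0`, as its `Z`-component is
`2 z₁`: the trace-free bracket with `X` cannot commute with `J` on `span {Z, W}`.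
-/

noncomputable section

/-- The bilinear antisymmetric bracket on ℝ⁴ determined by the structure constants. -/
def bk (z₁ z₂ z₃ w₁ θ₁ θ₂ : ℝ) (E F : Fin 4 → ℝ) : Fin 4 → ℝ :=
  (E 0 * F 1 - E 1 * F 0) • (![0, 0, -θ₁, -θ₂] : Fin 4 → ℝ) +
  (E 0 * F 2 - E 2 * F 0) • (![0, 0, -z₁, -w₁] : Fin 4 → ℝ) +
  (E 0 * F 3 - E 3 * F 0) • (![0, 0, -z₃, z₁] : Fin 4 → ℝ) +
  (E 1 * F 2 - E 2 * F 1) • (![0, 0, -z₂, -(z₂ * w₁ / z₁)] : Fin 4 → ℝ) +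
  (E 1 * F 3 - E 3 * F 1) • (![0, 0, -(z₂ * z₃ / z₁), z₂] : Fin 4 → ℝ) +
  (E 2 * F 3 - E 3 * F 2) • (![0, 0, 0, 0] : Fin 4 → ℝ)

/-- The almost Hermitian structure J with J(X)=Y, J(Y)=-X, J(Z)=W, J(W)=-Z. -/
def Jm (E : Fin 4 → ℝ) : Fin 4 → ℝ := ![-E 1, E 0, -E 3, E 2]

/-- The Nijenhuis tensor of J. -/
def NT (z₁ z₂ z₃ w₁ θ₁ θ₂ : ℝ) (E F : Fin 4 → ℝ) : Fin 4 → ℝ :=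
  bk z₁ z₂ z₃ w₁ θ₁ θ₂ E F + Jm (bk z₁ z₂ z₃ w₁ θ₁ θ₂ (Jm E) F) + Jm (bk z₁ z₂ z₃ w₁ θ₁ θ₂ E (Jm F)) -
    bk z₁ z₂ z₃ w₁ θ₁ θ₂ (Jm E) (Jm F)

section Nijenhuis

/-- The Nijenhuis tensor of `J` with respect to a bracket `B`. Both are arbitrary maps, so that it
specializes definitionally to `NT`. -/
def nijenhuis {V : Type*} [AddCommGroup V] (B : V → V → V) (J : V → V) (E F : V) : V :=
  B E F + J (B (J E) F) + J (B E (J F)) - B (J E) (J F)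

variable {K V : Type*} [AddCommGroup V]

theorem nijenhuis_eq_add_smul [CommRing K] [Module K V] {J : Module.End K V} (hJ : J * J = -1)
    {B : V → V → V} {E F : V} {t : K} (hE : B E (J F) = t • B E F)
    (hJE : B (J E) (J F) = t • B (J E) F) :
    nijenhuis B J E F = (B E F + J (B (J E) F)) + t • J (B E F + J (B (J E) F)) := by
  have hJJ (v : V) : J (J v) = -v := LinearMap.congr_fun hJ v
  simp only [nijenhuis, hE, hJE, map_add, map_smul, hJJ]
  module

theorem add_smul_ne_zero_of_mul_self_eq_neg_one [Field K] [LinearOrder K] [IsStrictOrderedRing K]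
    [Module K V] {J : Module.End K V} (hJ : J * J = -1) (t : K) {v : V} (hv : v ≠ 0) :
    v + t • J v ≠ 0 := by
  have hJJ : J (J v) = -v := LinearMap.congr_fun hJ v
  intro h
  have hmul : (1 + t * t) • v = 0 := by
    calc
      (1 + t * t) • v = (v + t • J v) - t • J (v + t • J v) := by
        simp only [map_add, map_smul, hJJ]
        module
      _ = 0 := by rw [h, map_zero, smul_zero, sub_zero]
  have hpos : 0 < 1 + t * t := add_pos_of_pos_of_nonneg one_pos (mul_self_nonneg t)
  exact (smul_ne_zero hpos.ne' hv) hmul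

theorem nijenhuis_ne_zero [Field K] [LinearOrder K] [IsStrictOrderedRing K] [Module K V]
    {J : Module.End K V} (hJ : J * J = -1) {B : V → V → V} {E F : V} {t : K}
    (hE : B E (J F) = t • B E F) (hJE : B (J E) (J F) = t • B (J E) F)
    (hne : B E F + J (B (J E) F) ≠ 0) : nijenhuis B J E F ≠ 0 := by
  rw [nijenhuis_eq_add_smul hJ hE hJE]
  exact add_smul_ne_zero_of_mul_self_eq_neg_one hJ t hne

end Nijenhuis

/-- The map `Jm`, bundled as a linear endomorphism of `ℝ⁴`. -/
def JmLinear : Module.End ℝ (Fin 4 → ℝ) where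
  toFun := Jm
  map_add' E F := by
    ext i
    fin_cases i <;> simp [Jm, add_comm]
  map_smul' c E := by
    ext i
    fin_cases i <;> simp [Jm]

theorem JmLinear_mul_self : JmLinear * JmLinear = -1 := by
  ext E i
  fin_cases i <;> simp [JmLinear, Jm]

theorem Jm_X : Jm ![1, 0, 0, 0] = ![0, 1, 0, 0] := by
  simp only [Jm, Matrix.cons_val, neg_zero]

theorem Jm_Z : Jm ![0, 0, 1, 0] = ![0, 0, 0, 1] := by
  simp only [Jm, Matrix.cons_val, neg_zero]

section Bracket

variable {z₁ : ℝ} (z₂ z₃ w₁ θ₁ θ₂ : ℝ)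

theorem bk_ideal_X (a b : ℝ) :
    bk z₁ z₂ z₃ w₁ θ₁ θ₂ ![0, 0, a, b] ![1, 0, 0, 0] =
      ![0, 0, a * z₁ + b * z₃, a * w₁ - b * z₁] := by
  ext i
  fin_cases i <;> simp [bk, sub_eq_add_neg]

theorem bk_ideal_Y_eq_smul_bk_ideal_X (hz₁ : z₁ ≠ 0) (a b : ℝ) :
    bk z₁ z₂ z₃ w₁ θ₁ θ₂ ![0, 0, a, b] ![0, 1, 0, 0] =
      (z₂ / z₁) • bk z₁ z₂ z₃ w₁ θ₁ θ₂ ![0, 0, a, b] ![1, 0, 0, 0] := by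
  rw [bk_ideal_X]
  ext i
  fin_cases i <;> simp [bk] <;> field_simp
  ring

theorem bk_Z_X_add_Jm_bk_W_X :
    bk z₁ z₂ z₃ w₁ θ₁ θ₂ ![0, 0, 1, 0] ![1, 0, 0, 0] +
        Jm (bk z₁ z₂ z₃ w₁ θ₁ θ₂ ![0, 0, 0, 1] ![1, 0, 0, 0]) =
      ![0, 0, 2 * z₁, w₁ + z₃] := by
  simp [Jm, bk_ideal_X, two_mul]

end Bracket

theorem g11_never_integrable (z₁ z₂ z₃ w₁ θ₁ θ₂ : ℝ) (h1 : z₁ ≠ 0) :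
    ∃ E F : Fin 4 → ℝ, NT z₁ z₂ z₃ w₁ θ₁ θ₂ E F ≠ 0 := by
  let X : Fin 4 → ℝ := ![1, 0, 0, 0]
  let Z : Fin 4 → ℝ := ![0, 0, 1, 0]
  let B := bk z₁ z₂ z₃ w₁ θ₁ θ₂
  have hBZ : B Z (Jm X) = (z₂ / z₁) • B Z X := by
    rw [Jm_X]
    exact bk_ideal_Y_eq_smul_bk_ideal_X z₂ z₃ w₁ θ₁ θ₂ h1 1 0
  have hBW : B (Jm Z) (Jm X) = (z₂ / z₁) • B (Jm Z) X := by
    rw [Jm_X, Jm_Z]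
    exact bk_ideal_Y_eq_smul_bk_ideal_X z₂ z₃ w₁ θ₁ θ₂ h1 0 1
  have hne : B Z X + Jm (B (Jm Z) X) ≠ 0 := by
    rw [Jm_Z, bk_Z_X_add_Jm_bk_W_X]
    exact fun h => mul_ne_zero two_ne_zero h1 (congrFun h 2)
  exact ⟨Z, X, nijenhuis_ne_zero (J := JmLinear) JmLinear_mul_self hBZ hBW hne⟩

end
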